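/- If G is a finite simple graph with n vertices, average degree Δ > 2, and girth g, then ⌊g/2⌋ ≤ log_{Δ-1}((Δ-2)/2 · n + 1). -/

import Mathlib

open SimpleGraph Real

theorem SimpleGraph.Walk.IsPath.eq_of_length_add_lt_egirth {V : Type*} {G : SimpleGraph V} {a b : V}
    {p q : G.Walk a b} (hp : p.IsPath) (hq : q.IsPath)
    (h : ((p.length + q.length : ℕ) : ℕ∞) < G.egirth) : p = q := by
  by_contra hne
  obtain ⟨_, _, p', q', hp', hq', hc⟩ := hp.exists_isCycle_of_ne hq hne
  have hle := egirth_le_length hc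
  rw [Walk.length_append, Walk.length_reverse] at hle
  exact (hle.trans (Nat.cast_le.2 (add_le_add (Walk.length_le_of_isSubwalk hp')
    (Walk.length_le_of_isSubwalk hq')))).not_gt h

theorem convexOn_mul_log_sub_one : ConvexOn ℝ (Set.Ici 2) fun x : ℝ ↦ x * log (x - 1) := by
  refine convexOn_of_hasDerivWithinAt2_nonneg (f' := fun x ↦ log (x - 1) + x / (x - 1))
    (f'' := fun x ↦ (x - 2) / (x - 1) ^ 2) (convex_Ici 2) ?_ ?_ ?_ ?_
  · refine ContinuousOn.mul continuousOn_id (ContinuousOn.log (by fun_prop) ?_)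
    intro x hx
    have : (2 : ℝ) ≤ x := hx
    linarith
  · intro x hx
    have hx : (2 : ℝ) < x := by simpa using hx
    have h1 : x - 1 ≠ 0 := by linarith
    have := (hasDerivAt_id x).mul (((hasDerivAt_id x).sub_const 1).log h1)
    refine (this.congr_deriv ?_).hasDerivWithinAt
    simp
    ring
  · intro x hx
    have hx : (2 : ℝ) < x := by simpa using hx
    have h1 : x - 1 ≠ 0 := by linarith
    have := (((hasDerivAt_id x).sub_const 1).log h1).add
      ((hasDerivAt_id x).div ((hasDerivAt_id x).sub_const 1) h1)
    refine (this.congr_deriv ?_).hasDerivWithinAt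
    simp
    field_simp
    ring
  · intro x hx
    have hx : (2 : ℝ) < x := by simpa using hx
    have : 0 ≤ x - 2 := by linarith
    positivity

theorem Finset.sum_log_le_card_mul_log {ι : Type*} (s : Finset ι) (a : ι → ℝ)
    (ha : ∀ i ∈ s, 0 < a i) :
    ∑ i ∈ s, log (a i) ≤ s.card * log ((∑ i ∈ s, a i) / s.card) := by
  rcases s.eq_empty_or_nonempty with rfl | hs
  · simp
  have hc : (0 : ℝ) < s.card := by exact_mod_cast hs.card_pos
  have := strictConcaveOn_log_Ioi.concaveOn.le_map_sum (t := s) (w := fun _ ↦ (s.card : ℝ)⁻¹)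
    (p := a) (fun _ _ ↦ by positivity) (by simp [hc.ne']) ha
  simp only [smul_eq_mul, ← Finset.mul_sum] at this
  rwa [inv_mul_le_iff₀ hc, inv_mul_eq_div] at this

namespace SimpleGraph

theorem egirth_le_egirth_induce {V : Type*} (G : SimpleGraph V) (s : Set V) :
    G.egirth ≤ (G.induce s).egirth :=
  IsContained.egirth_le ⟨Copy.induce G s⟩

theorem sum_neighborFinset_comm {V M : Type*} [Fintype V] (G : SimpleGraph V) [DecidableRel G.Adj]
    [AddCommMonoid M] (f : V → V → M) :
    ∑ u, ∑ v ∈ G.neighborFinset u, f u v = ∑ v, ∑ u ∈ G.neighborFinset v, f u v :=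
  Finset.sum_comm' (by simp [adj_comm])

theorem sum_degree_mul_log_le {V : Type*} [Fintype V] {G : SimpleGraph V} [DecidableRel G.Adj]
    (hdeg : ∀ v, 2 ≤ G.degree v) {δ : ℝ} (hδ : 2 < δ)
    (h : δ * Fintype.card V ≤ ∑ v, (G.degree v : ℝ)) :
    (∑ v, (G.degree v : ℝ)) * log (δ - 1) ≤ ∑ v, (G.degree v * log (G.degree v - 1) : ℝ) := by
  rcases isEmpty_or_nonempty V with hV | hV
  · simp
  have hn : (0 : ℝ) < Fintype.card V := by exact_mod_cast Fintype.card_pos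
  have := convexOn_mul_log_sub_one.map_sum_le (t := Finset.univ)
    (w := fun _ : V ↦ (Fintype.card V : ℝ)⁻¹) (p := fun v ↦ (G.degree v : ℝ))
    (fun _ _ ↦ by positivity) (by simp [hn.ne'])
    fun v _ ↦ Set.mem_Ici.2 (by exact_mod_cast hdeg v)
  simp only [smul_eq_mul, ← Finset.mul_sum] at this
  rw [mul_assoc, mul_le_mul_iff_right₀ (by positivity)] at this
  refine le_trans ?_ this
  have hle : δ ≤ (Fintype.card V : ℝ)⁻¹ * ∑ v, (G.degree v : ℝ) := by
    rwa [inv_mul_eq_div, le_div_iff₀ hn]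
  gcongr
  linarith

section NonBacktracking

variable {V : Type*} [Fintype V] [DecidableEq V] (G : SimpleGraph V) [DecidableRel G.Adj]

/-- The number of non-backtracking walks of length `i` that continue the dart from `u` to `v`. -/
def nonBacktrackingCount : ℕ → V → V → ℕ
  | 0, _, _ => 1
  | i + 1, u, v => ∑ w ∈ (G.neighborFinset v).erase u, nonBacktrackingCount i v w

/-- The endpoints of the non-backtracking walks of length `i` that continue the dart
from `u` to `v`. -/
def nonBacktrackingEndpoints : ℕ → V → V → Finset V
  | 0, _, v => {v}
  | i + 1, u, v => ((G.neighborFinset v).erase u).biUnion fun w ↦ nonBacktrackingEndpoints i v w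

variable {G}

theorem exists_isPath_of_mem_nonBacktrackingEndpoints {i : ℕ} {u v x : V} (huv : G.Adj u v)
    (hi : ((i + 1 : ℕ) : ℕ∞) < G.egirth) (hx : x ∈ G.nonBacktrackingEndpoints i u v) :
    ∃ p : G.Walk v x, p.IsPath ∧ p.length = i ∧ u ∉ p.support := by
  induction i generalizing u v with
  | zero =>
    obtain rfl : x = v := by simpa [nonBacktrackingEndpoints] using hx
    exact ⟨.nil, by simp, by simp, by simpa using huv.ne⟩
  | succ i ih =>
    simp only [nonBacktrackingEndpoints, Finset.mem_biUnion, Finset.mem_erase,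
      mem_neighborFinset] at hx
    obtain ⟨w, ⟨hwu, hvw⟩, hx⟩ := hx
    obtain ⟨p, hp, hlen, hv⟩ := ih hvw (lt_of_le_of_lt (by gcongr; omega) hi) hx
    refine ⟨.cons hvw p, hp.cons hv, by simp [hlen], fun hu ↦ ?_⟩
    have hu : u ∈ p.support := by simpa [huv.ne] using hu
    have hle := p.length_takeUntil_le_length hu
    have hv' : v ∉ (p.takeUntil u hu).support := fun h ↦ hv (p.support_takeUntil_subset_support hu h)
    have heq := Walk.IsPath.eq_of_length_add_lt_egirth (p := .cons hvw (p.takeUntil u hu))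
      (q := .cons huv.symm .nil) ((hp.takeUntil hu).cons hv') (by simp [huv.ne'])
      (lt_of_le_of_lt (Nat.cast_le.2 (by simp; omega)) hi)
    have := congrArg Walk.support heq
    simp only [Walk.support_cons, Walk.support_nil, List.cons.injEq, true_and] at this
    rw [← Walk.cons_tail_support] at this
    exact hwu (List.cons.inj this).1

theorem card_nonBacktrackingEndpoints {i : ℕ} {u v : V} (huv : G.Adj u v)
    (hi : ((2 * i + 1 : ℕ) : ℕ∞) < G.egirth) :
    (G.nonBacktrackingEndpoints i u v).card = G.nonBacktrackingCount i u v := by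
  induction i generalizing u v with
  | zero => simp [nonBacktrackingEndpoints, nonBacktrackingCount]
  | succ i ih =>
    rw [nonBacktrackingEndpoints, nonBacktrackingCount, Finset.card_biUnion]
    · refine Finset.sum_congr rfl fun w hw ↦ ih ?_ (lt_of_le_of_lt (by gcongr; omega) hi)
      simpa using Finset.mem_of_mem_erase hw
    · intro w hw w' hw' hne
      have hvw : G.Adj v w := by simpa using Finset.mem_of_mem_erase hw
      have hvw' : G.Adj v w' := by simpa using Finset.mem_of_mem_erase hw'
      have hi' : ((i + 1 : ℕ) : ℕ∞) < G.egirth := lt_of_le_of_lt (by gcongr; omega) hi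
      refine Finset.disjoint_left.2 fun x hx hx' ↦ hne ?_
      obtain ⟨p, hp, hlen, hv⟩ := exists_isPath_of_mem_nonBacktrackingEndpoints hvw hi' hx
      obtain ⟨q, hq, hlen', hv'⟩ := exists_isPath_of_mem_nonBacktrackingEndpoints hvw' hi' hx'
      have heq := Walk.IsPath.eq_of_length_add_lt_egirth (hp.cons (h := hvw) hv)
        (hq.cons (h := hvw') hv') (lt_of_le_of_lt (Nat.cast_le.2 (by simp; omega)) hi)
      exact (Walk.cons.inj heq).1

theorem sum_nonBacktrackingCount_le_card {k : ℕ} (hk : ((2 * k : ℕ) : ℕ∞) ≤ G.egirth) {u v : V}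
    (huv : G.Adj u v) :
    ∑ i ∈ Finset.range k, (G.nonBacktrackingCount i u v + G.nonBacktrackingCount i v u) ≤
      Fintype.card V := by
  have hlt {j : ℕ} (hj : j < 2 * k) : (j : ℕ∞) < G.egirth :=
    lt_of_lt_of_le (Nat.cast_lt.2 hj) hk
  have hdisj {u v : V} (huv : G.Adj u v) : Set.PairwiseDisjoint (Finset.range k : Set ℕ)
      fun i ↦ G.nonBacktrackingEndpoints i u v := by
    intro i hi j hj hij
    have hi : i < k := by simpa using hi
    have hj : j < k := by simpa using hj
    refine Finset.disjoint_left.2 fun x hx hx' ↦ hij ?_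
    obtain ⟨p, hp, hlen, -⟩ :=
      exists_isPath_of_mem_nonBacktrackingEndpoints huv (hlt (by omega)) hx
    obtain ⟨q, hq, hlen', -⟩ :=
      exists_isPath_of_mem_nonBacktrackingEndpoints huv (hlt (by omega)) hx'
    rw [← hlen, ← hlen', hp.eq_of_length_add_lt_egirth hq (hlt (by omega))]
  have hcard {u v : V} (huv : G.Adj u v) :
      ((Finset.range k).biUnion fun i ↦ G.nonBacktrackingEndpoints i u v).card =
        ∑ i ∈ Finset.range k, G.nonBacktrackingCount i u v := by
    rw [Finset.card_biUnion (hdisj huv)]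
    refine Finset.sum_congr rfl fun i hi ↦ card_nonBacktrackingEndpoints huv (hlt ?_)
    have := Finset.mem_range.1 hi
    omega
  rw [Finset.sum_add_distrib, ← hcard huv, ← hcard huv.symm, ← Finset.card_union_of_disjoint]
  · exact Finset.card_le_univ _
  · refine Finset.disjoint_left.2 fun x hx hx' ↦ ?_
    simp only [Finset.mem_biUnion, Finset.mem_range] at hx hx'
    obtain ⟨i, hi, hx⟩ := hx
    obtain ⟨j, hj, hx'⟩ := hx'
    obtain ⟨p, hp, hlen, hu⟩ :=
      exists_isPath_of_mem_nonBacktrackingEndpoints huv (hlt (by omega)) hx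
    obtain ⟨q, hq, hlen', hv⟩ :=
      exists_isPath_of_mem_nonBacktrackingEndpoints huv.symm (hlt (by omega)) hx'
    have heq := hp.eq_of_length_add_lt_egirth (hq.cons (h := huv.symm) hv)
      (hlt (by simp; omega))
    exact hu (by simp [heq])

theorem nonBacktrackingCount_pos (hdeg : ∀ v, 2 ≤ G.degree v) (i : ℕ) (u v : V) :
    0 < G.nonBacktrackingCount i u v := by
  induction i generalizing u v with
  | zero => simp [nonBacktrackingCount]
  | succ i ih =>
    refine Finset.sum_pos (fun w _ ↦ ih v w) (Finset.card_pos.1 ?_)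
    have := Finset.pred_card_le_card_erase (s := G.neighborFinset v) (a := u)
    have := hdeg v
    rw [← card_neighborFinset_eq_degree] at this
    omega

theorem mul_sum_degree_mul_log_le (hdeg : ∀ v, 2 ≤ G.degree v) (i : ℕ) :
    i * ∑ v, (G.degree v * log (G.degree v - 1) : ℝ) ≤
      ∑ u, ∑ v ∈ G.neighborFinset u, log (G.nonBacktrackingCount i u v) := by
  induction i with
  | zero => simp [nonBacktrackingCount]
  | succ i ih =>
    have hstep (v : V) : (G.degree v * log (G.degree v - 1) : ℝ) +
        ∑ w ∈ G.neighborFinset v, log (G.nonBacktrackingCount i v w) ≤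
        ∑ u ∈ G.neighborFinset v, log (G.nonBacktrackingCount (i + 1) u v) := by
      have hd : (2 : ℝ) ≤ G.degree v := by exact_mod_cast hdeg v
      have hd1 : (0 : ℝ) < G.degree v - 1 := by linarith
      have hterm : ∀ u ∈ G.neighborFinset v, log (G.degree v - 1 : ℝ) +
          (∑ w ∈ G.neighborFinset v, log (G.nonBacktrackingCount i v w) -
            log (G.nonBacktrackingCount i v u)) / (G.degree v - 1) ≤
          log (G.nonBacktrackingCount (i + 1) u v) := by
        intro u hu
        have hcard : (((G.neighborFinset v).erase u).card : ℝ) = G.degree v - 1 := by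
          rw [Finset.card_erase_of_mem hu, card_neighborFinset_eq_degree, Nat.cast_sub]
          · simp
          · exact le_trans (by norm_num) (hdeg v)
        have hpos : (0 : ℝ) < G.nonBacktrackingCount (i + 1) u v := by
          exact_mod_cast nonBacktrackingCount_pos hdeg (i + 1) u v
        have := Finset.sum_log_le_card_mul_log ((G.neighborFinset v).erase u)
          (fun w ↦ (G.nonBacktrackingCount i v w : ℝ))
          fun w _ ↦ by exact_mod_cast nonBacktrackingCount_pos hdeg i v w
        rw [hcard, ← Nat.cast_sum, ← nonBacktrackingCount, log_div hpos.ne' hd1.ne',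
          Finset.sum_erase_eq_sub hu] at this
        have := (div_le_iff₀' hd1).2 this
        linarith
      refine le_of_eq_of_le ?_ (Finset.sum_le_sum hterm)
      rw [Finset.sum_add_distrib, ← Finset.sum_div, Finset.sum_sub_distrib]
      simp only [Finset.sum_const, card_neighborFinset_eq_degree, nsmul_eq_mul]
      field_simp
    rw [G.sum_neighborFinset_comm]
    refine le_trans ?_ (Finset.sum_le_sum fun v _ ↦ hstep v)
    rw [Finset.sum_add_distrib]
    push_cast
    linarith

theorem sum_degree_mul_pow_le (hdeg : ∀ v, 2 ≤ G.degree v) {δ : ℝ} (hδ : 2 < δ)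
    (h : δ * Fintype.card V ≤ ∑ v, (G.degree v : ℝ)) (i : ℕ) :
    (∑ v, (G.degree v : ℝ)) * (δ - 1) ^ i ≤
      ∑ u, ∑ v ∈ G.neighborFinset u, (G.nonBacktrackingCount i u v : ℝ) := by
  have hM : 0 < (δ - 1) ^ i := pow_pos (by linarith) i
  have hlog := (mul_le_mul_of_nonneg_left (sum_degree_mul_log_le hdeg hδ h)
    (Nat.cast_nonneg i)).trans (mul_sum_degree_mul_log_le hdeg i)
  have hterm (u v : V) : log (G.nonBacktrackingCount i u v) - i * log (δ - 1) ≤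
      G.nonBacktrackingCount i u v / (δ - 1) ^ i - 1 := by
    have hpos : (0 : ℝ) < G.nonBacktrackingCount i u v := by
      exact_mod_cast nonBacktrackingCount_pos hdeg i u v
    rw [← log_pow, ← log_div hpos.ne' hM.ne']
    exact log_le_sub_one_of_pos (by positivity)
  have := Finset.sum_le_sum fun u (_ : u ∈ Finset.univ) ↦
    Finset.sum_le_sum fun v (_ : v ∈ G.neighborFinset u) ↦ hterm u v
  simp only [Finset.sum_sub_distrib, Finset.sum_const, card_neighborFinset_eq_degree,
    nsmul_eq_mul, mul_one, ← Finset.sum_mul, ← Finset.sum_div] at this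
  rw [← le_div_iff₀ hM]
  linarith

theorem two_mul_sum_pow_le_card_of_two_le_degree [Nonempty V] {k : ℕ}
    (hk : ((2 * k : ℕ) : ℕ∞) ≤ G.egirth) (hdeg : ∀ v, 2 ≤ G.degree v) {δ : ℝ} (hδ : 2 < δ)
    (h : δ * Fintype.card V ≤ ∑ v, (G.degree v : ℝ)) :
    2 * ∑ i ∈ Finset.range k, (δ - 1) ^ i ≤ Fintype.card V := by
  have hn : (0 : ℝ) < Fintype.card V := by exact_mod_cast Fintype.card_pos
  have hD : 0 < ∑ v, (G.degree v : ℝ) := lt_of_lt_of_le (by positivity) h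
  refine le_of_mul_le_mul_left ?_ hD
  have hupper : ∑ u, ∑ v ∈ G.neighborFinset u, ∑ i ∈ Finset.range k,
      ((G.nonBacktrackingCount i u v : ℝ) + G.nonBacktrackingCount i v u) ≤
      (∑ v, (G.degree v : ℝ)) * Fintype.card V := by
    rw [Finset.sum_mul]
    refine Finset.sum_le_sum fun u _ ↦ ?_
    rw [← nsmul_eq_mul, ← card_neighborFinset_eq_degree]
    refine Finset.sum_le_card_nsmul _ _ _ fun v hv ↦ ?_
    exact_mod_cast sum_nonBacktrackingCount_le_card hk ((G.mem_neighborFinset u v).1 hv)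
  refine le_trans ?_ hupper
  simp only [Finset.sum_add_distrib]
  rw [G.sum_neighborFinset_comm fun u v ↦ ∑ i ∈ Finset.range k, (G.nonBacktrackingCount i v u : ℝ),
    ← two_mul, mul_left_comm, Finset.mul_sum]
  gcongr
  simp_rw [Finset.sum_comm (t := Finset.range k)]
  exact Finset.sum_le_sum fun i _ ↦ sum_degree_mul_pow_le hdeg hδ h i

end NonBacktracking

theorem two_mul_sum_pow_le_card {V : Type*} [Fintype V] [Nonempty V] (G : SimpleGraph V)
    [DecidableRel G.Adj] {k : ℕ} (hk : ((2 * k : ℕ) : ℕ∞) ≤ G.egirth) {δ : ℝ} (hδ : 2 < δ)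
    (h : δ * Fintype.card V ≤ 2 * G.edgeFinset.card) :
    2 * ∑ i ∈ Finset.range k, (δ - 1) ^ i ≤ Fintype.card V := by
  classical
  induction hn : Fintype.card V generalizing V with
  | zero => exact absurd hn Fintype.card_ne_zero
  | succ n ih =>
    by_cases hdeg : ∀ v, 2 ≤ G.degree v
    · rw [← hn]
      refine two_mul_sum_pow_le_card_of_two_le_degree hk hdeg hδ ?_
      rw [← Nat.cast_sum, sum_degrees_eq_twice_card_edges]
      exact_mod_cast h
    · push Not at hdeg
      obtain ⟨v, hv⟩ := hdeg
      have hcard : Fintype.card ({v}ᶜ : Set V) = n := by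
        rw [Fintype.card_compl_set, hn]
        simp
      have hedge := G.card_edgeFinset_induce_compl_singleton v
      rw [G.card_edgeFinset_deleteIncidenceSet v] at hedge
      have hedge' : G.edgeFinset.card ≤ (G.induce ({v}ᶜ : Set V)).edgeFinset.card + 1 := by
        omega
      have hedgeR : (G.edgeFinset.card : ℝ) ≤
          (G.induce ({v}ᶜ : Set V)).edgeFinset.card + 1 := by exact_mod_cast hedge'
      rw [hn] at h
      push_cast at h ⊢
      have hne : Nonempty ({v}ᶜ : Set V) := by
        by_contra hempty
        rw [not_nonempty_iff] at hempty
        have : IsEmpty ((G.induce ({v}ᶜ : Set V)).edgeSet) :=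
          ⟨fun e ↦ e.1.ind (fun a _ ↦ hempty.elim a)⟩
        have h0 : (G.induce ({v}ᶜ : Set V)).edgeFinset.card = 0 := by
          rw [edgeFinset_card, Fintype.card_eq_zero]
        rw [h0] at hedgeR
        push_cast at hedgeR
        have : 0 ≤ δ * n := by positivity
        linarith
      have := ih (G.induce ({v}ᶜ : Set V)) (hk.trans (G.egirth_le_egirth_induce _))
        (by rw [hcard]; linarith) hcard
      linarith

end SimpleGraph

/-- Moore bound for irregular graphs: if a finite simple graph `G` on `n` vertices
has average degree `Δ = 2|E|/n > 2` and contains a cycle (girth `g`), then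
`⌊g/2⌋ ≤ log_{Δ-1}((Δ-2)/2 · n + 1)`. -/
theorem moore_bound_irregular {V : Type*} [Fintype V] [DecidableEq V]
    (G : SimpleGraph V) [DecidableRel G.Adj]
    (n : ℕ) (hn : n = Fintype.card V)
    (Δ : ℝ) (hΔdef : Δ = (2 * G.edgeFinset.card : ℝ) / n)
    (hΔ : 2 < Δ) (hcyc : ¬ G.IsAcyclic) :
    ((G.girth / 2 : ℕ) : ℝ) ≤ Real.logb (Δ - 1) ((Δ - 2) / 2 * n + 1) := by
  have hn0 : (n : ℝ) ≠ 0 := by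
    intro h0
    rw [h0, div_zero] at hΔdef
    linarith
  have : Nonempty V := Fintype.card_pos_iff.1 (by
    rw [← hn]
    exact Nat.pos_of_ne_zero (by exact_mod_cast hn0))
  have hk : ((2 * (G.girth / 2) : ℕ) : ℕ∞) ≤ G.egirth :=
    le_trans (Nat.cast_le.2 (Nat.mul_div_le _ _)) G.egirth.natCast_toNat_le_self
  have hbound := G.two_mul_sum_pow_le_card hk hΔ (by
    rw [← hn, hΔdef, div_mul_cancel₀ _ hn0])
  rw [← hn] at hbound
  have hgeom := geom_sum_mul (Δ - 1) (G.girth / 2)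
  have hmul := mul_le_mul_of_nonneg_left hbound (show 0 ≤ (Δ - 2) / 2 by linarith)
  have hpos : 0 < (Δ - 2) / 2 * n + 1 := by
    have : 0 < Δ - 2 := by linarith
    positivity
  rw [Real.le_logb_iff_rpow_le (by linarith) hpos, Real.rpow_natCast]
  linarith
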